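/- arXiv:1805.03552 — 2 statements merged into one kernel-verified Lean document; each statement's English description precedes it below -/
import Mathlib

section
/- Let G ↷ Y be a p.m.p. action of a countable group, and let q0 : X0 → Y and q1 : X1 → Y be extensions of G-actions with q1 relatively weakly mixing. Let L be a Polish group admitting a bi-invariant metric, let w0 : G × X0 → L and w1 : G × X1 → L be measurable cocycles, and suppose F : X0 ⊗_Y X1 → L is measurable with w0(g, x0) = F(gx0, gx1) w1(g, x1) F(x0, x1)^{-1} for all g and a.e. (x0, x1). Then there exist measurable φ0 : X0 → L, φ1 : X1 → L and a measurable cocycle w : G × Y → L such that F(x0,x1) = φ0(x0)^{-1} φ1(x1), w(g, q0(x0)) = φ0(gx0) w0(g,x0) φ0(x0)^{-1}, and w(g, q1(x1)) = φ1(gx1) w1(g,x1) φ1(x1)^{-1} almost everywhere. -/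
open MeasureTheory ProbabilityTheory
open scoped ENNReal

/-- `w : G × X → L` is a measurable cocycle for the action `act` of `G` on `X`. -/
def IsCocycle {G X L : Type*} [Group G] [Group L] [MeasurableSpace X] [MeasurableSpace L]
    (μ : Measure X) (act : G → X → X) (w : G → X → L) : Prop :=
  (∀ g : G, Measurable (w g)) ∧
    ∀ g h : G, ∀ᵐ x ∂μ, w (g * h) x = w g (act h x) * w h x


lemma aux_measurableSet_ae {A W : Type*} [MeasurableSpace A] [MeasurableSpace W]
    (l : Kernel A W) [IsSFiniteKernel l] {Q : A → W → Prop}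
    (hQ : MeasurableSet {p : A × W | Q p.1 p.2}) :
    MeasurableSet {a : A | ∀ᵐ w ∂(l a), Q a w} := by
  have := Kernel.measurable_kernel_prodMk_left (κ := l) hQ.compl
  have h2 := this (measurableSet_singleton 0)
  convert! h2 using 1

lemma aux_ae_bind_iff {Y X : Type*} [MeasurableSpace Y] [MeasurableSpace X]
    (ν : Measure Y) (κ : Kernel Y X) {P : X → Prop} (hP : MeasurableSet {x | P x}) :
    (∀ᵐ x ∂(ν.bind (fun y => κ y)), P x) ↔ ∀ᵐ y ∂ν, ∀ᵐ x ∂(κ y), P x := by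
  constructor
  · intro h
    exact Measure.ae_ae_of_ae_bind κ.measurable.aemeasurable h
  · intro h
    rw [ae_iff]
    have hm : MeasurableSet {x | ¬ P x} := hP.compl
    rw [Measure.bind_apply hm κ.measurable.aemeasurable,
      lintegral_eq_zero_iff (κ.measurable_coe hm)]
    exact h

lemma aux_sel {Y X : Type*} [MeasurableSpace Y] [MeasurableSpace X] [StandardBorelSpace X]
    (ν : Measure Y) [IsProbabilityMeasure ν] (κ : Kernel Y X) [IsMarkovKernel κ]
    {P : Y → X → Prop} (hm : MeasurableSet {p : Y × X | P p.1 p.2})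
    (h : ∀ᵐ y ∂ν, ∀ᵐ x ∂(κ y), P y x) :
    ∃ s : Y → X, Measurable s ∧ ∀ᵐ y ∂ν, P y (s y) := by
  obtain ⟨y0⟩ : Nonempty Y := nonempty_of_isProbabilityMeasure ν
  have : Nonempty X := nonempty_of_isProbabilityMeasure (κ y0)
  obtain ⟨f, hf, hfκ⟩ := κ.exists_measurable_map_eq_unitInterval
  have h1 : ∀ᵐ y ∂ν, ∀ᵐ t ∂(volume : Measure unitInterval), P y (f y t) := by
    filter_upwards [h] with y hy
    rw [← hfκ y] at hy
    exact ae_of_ae_map (hf.of_uncurry_left).aemeasurable hy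
  have hm2 : MeasurableSet {p : Y × unitInterval | P p.1 (f p.1 p.2)} := by
    have : Measurable (fun p : Y × unitInterval => (p.1, f p.1 p.2)) :=
      measurable_fst.prodMk hf
    exact this hm
  rw [Measure.ae_ae_comm hm2] at h1
  obtain ⟨t, ht⟩ := h1.exists
  exact ⟨fun y => f y t, hf.of_uncurry_right, ht⟩

lemma aux_sel2 {Y X W : Type*} [MeasurableSpace Y] [MeasurableSpace X] [StandardBorelSpace X]
    [MeasurableSpace W]
    (ν : Measure Y) [IsProbabilityMeasure ν] (κ : Kernel Y X) [IsMarkovKernel κ]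
    (l : Kernel Y W) [IsMarkovKernel l] {Q : X → W → Prop}
    (hm : MeasurableSet {p : X × W | Q p.1 p.2})
    (h : ∀ᵐ y ∂ν, ∀ᵐ x ∂(κ y), ∀ᵐ t ∂(l y), Q x t) :
    ∃ s : Y → X, Measurable s ∧ ∀ᵐ y ∂ν, ∀ᵐ t ∂(l y), Q (s y) t := by
  have hm' : MeasurableSet {r : (Y × X) × W | Q r.1.2 r.2} := by
    have : Measurable (fun r : (Y × X) × W => (r.1.2, r.2)) := by fun_prop
    exact this hm
  have h2 := aux_measurableSet_ae (l.comap (Prod.fst : Y × X → Y) measurable_fst)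
    (Q := fun p t => Q p.2 t) hm'
  simp only [Kernel.comap_apply] at h2
  exact aux_sel ν κ (P := fun y x => ∀ᵐ t ∂(l y), Q x t) h2 h

lemma aux_equivariant {G Y X : Type*} [Group G] [MeasurableSpace Y]
    [MeasurableSpace X] [StandardBorelSpace X]
    (ν : Measure Y) [IsProbabilityMeasure ν] (μ : Measure X)
    (T : G → Y → Y) (S : G → X → X)
    (hT_one : ∀ y, T 1 y = y) (hT_mul : ∀ g h y, T (g * h) y = T g (T h y))
    (hT_pmp : ∀ g, MeasurePreserving (T g) ν ν)
    (hS_pmp : ∀ g, MeasurePreserving (S g) μ μ)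
    (q : X → Y) (hq : Measurable q)
    (hq_equiv : ∀ g : G, ∀ᵐ x ∂μ, q (S g x) = T g (q x))
    (κ : Kernel Y X) [IsMarkovKernel κ]
    (hκ : μ = ν.bind (fun y => κ y))
    (hfib : ∀ᵐ y ∂ν, ∀ᵐ x ∂(κ y), q x = y) (g : G) :
    ∀ᵐ y ∂ν, κ (T g y) = (κ y).map (S g) := by
  have hSm := (hS_pmp g).measurable
  have hTm := (hT_pmp g).measurable
  have key : ∀ (E : Set Y) (A : Set X), MeasurableSet E → MeasurableSet A →
      ∫⁻ y in E, κ y A ∂ν = μ (q ⁻¹' E ∩ A) := by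
    intro E A hE hA
    rw [hκ, Measure.bind_apply ((hq hE).inter hA) κ.measurable.aemeasurable,
      ← lintegral_indicator hE]
    refine lintegral_congr_ae ?_
    filter_upwards [hfib] with y hy
    by_cases hyE : y ∈ E
    · simp only [hyE, Set.indicator_of_mem]
      refine measure_congr ?_
      filter_upwards [hy] with x hx
      apply propext
      change (x ∈ A) ↔ (q x ∈ E ∧ x ∈ A)
      rw [hx]; tauto
    · simp only [hyE, not_false_eq_true, Set.indicator_of_notMem]
      symm
      rw [measure_eq_zero_iff_ae_notMem]
      filter_upwards [hy] with x hx h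
      have := h.1
      rw [Set.mem_preimage, hx] at this
      exact hyE this
  have heq : ν ⊗ₘ (κ.comap (T g) hTm) = ν ⊗ₘ (κ.map (S g)) := by
    have : IsMarkovKernel (κ.map (S g)) := Kernel.IsMarkovKernel.map κ hSm
    refine Measure.ext_prod fun {E A} hE hA => ?_
    rw [Measure.compProd_apply_prod hE hA, Measure.compProd_apply_prod hE hA]
    have hE' : MeasurableSet (T g⁻¹ ⁻¹' E) := (hT_pmp g⁻¹).measurable hE
    have hpre : T g ⁻¹' (T g⁻¹ ⁻¹' E) = E := by
      ext y
      simp [Set.mem_preimage, ← hT_mul, hT_one]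
    have l1 : ∫⁻ y in E, (κ.comap (T g) hTm) y A ∂ν = μ (q ⁻¹' (T g⁻¹ ⁻¹' E) ∩ A) := by
      rw [← key _ _ hE' hA]
      conv_lhs => rw [← hpre]
      simp only [Kernel.comap_apply]
      exact (hT_pmp g).setLIntegral_comp_preimage hE' (κ.measurable_coe hA)
    have l2 : ∫⁻ y in E, (κ.map (S g)) y A ∂ν = μ (q ⁻¹' E ∩ S g ⁻¹' A) := by
      rw [← key _ _ hE (hSm hA)]
      simp only [Kernel.map_apply _ hSm, Measure.map_apply hSm hA]
    rw [l1, l2, ← (hS_pmp g).measure_preimage ((hq hE').inter hA).nullMeasurableSet]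
    refine measure_congr ?_
    filter_upwards [hq_equiv g] with x hx
    apply propext
    change (T g⁻¹ (q (S g x)) ∈ E ∧ S g x ∈ A) ↔ (q x ∈ E ∧ S g x ∈ A)
    rw [hx, ← hT_mul]
    simp [hT_one]
  have : IsMarkovKernel (κ.map (S g)) := Kernel.IsMarkovKernel.map κ hSm
  filter_upwards [Kernel.ae_eq_of_compProd_eq heq] with y hy
  rw [Kernel.comap_apply, Kernel.map_apply _ hSm] at hy
  exact hy

lemma aux_e_tri {L : Type*} [MetricSpace L] (a b c : L) :
    min 1 (edist a b) ≤ min 1 (edist a c) + min 1 (edist b c) := by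
  rcases le_total 1 (edist a c) with h | h
  · rw [min_eq_left h]; exact (min_le_left _ _).trans le_self_add
  rcases le_total 1 (edist b c) with h' | h'
  · rw [min_eq_left h']; exact (min_le_left _ _).trans le_add_self
  rw [min_eq_right h, min_eq_right h']
  exact (min_le_right _ _).trans (edist_triangle_right a b c)

lemma aux_e_ofReal {L : Type*} [MetricSpace L] (a b : L) :
    min 1 (edist a b) = ENNReal.ofReal (min 1 (dist a b)) := by
  rw [ENNReal.ofReal_min, ENNReal.ofReal_one, edist_dist]

lemma aux_sep {Z X L : Type*} [MeasurableSpace Z] [MeasurableSpace.CountablyGenerated Z]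
    [MeasurableSpace X] [MetricSpace L] [TopologicalSpace.SeparableSpace L]
    [MeasurableSpace L] [BorelSpace L]
    (η : Measure Z) [IsProbabilityMeasure η] (β : Measure X) [IsProbabilityMeasure β]
    (K : Z × X → L) (hK : Measurable K) (r : ℝ≥0∞) (hr : 0 < r) :
    (β.prod β) {p : X × X | ∫⁻ z, min 1 (edist (K (z, p.1)) (K (z, p.2))) ∂η < r} ≠ 0 := by
  have := UniformSpace.secondCountable_of_separable L
  obtain ⟨x0⟩ : Nonempty X := nonempty_of_isProbabilityMeasure β
  obtain ⟨z0⟩ : Nonempty Z := nonempty_of_isProbabilityMeasure η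
  have : Nonempty L := ⟨K (z0, x0)⟩
  have hKx : ∀ x, Measurable (fun z => K (z, x)) := fun x => hK.comp measurable_prodMk_right
  let l : ℕ → L := TopologicalSpace.denseSeq L
  have hl : DenseRange l := TopologicalSpace.denseRange_denseSeq L
  let Φ : ℕ → L → ℝ := fun n a => min 1 (dist a (l n))
  have hΦ : ∀ n, Measurable (Φ n) := fun n => by fun_prop
  have hmem : ∀ x n, MemLp (fun z => Φ n (K (z, x))) 1 η := by
    intro x n
    refine MemLp.of_bound ((hΦ n).comp (hKx x)).aestronglyMeasurable 1 (ae_of_all _ fun z => ?_)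
    have h0 : 0 ≤ Φ n (K (z, x)) := le_min zero_le_one dist_nonneg
    rw [Real.norm_eq_abs, abs_of_nonneg h0]
    exact min_le_left _ _
  have : Fact ((1 : ℝ≥0∞) ≤ 1) := ⟨le_rfl⟩
  have : Fact ((1 : ℝ≥0∞) ≠ ∞) := ⟨ENNReal.one_ne_top⟩
  let Ψ : X → ℕ → Lp ℝ 1 η := fun x n => (hmem x n).toLp
  obtain ⟨c, hc⟩ : ∃ c : ℕ → X, ∀ U : Set (ℕ → Lp ℝ 1 η), IsOpen U → ∀ x, Ψ x ∈ U →
      ∃ j, Ψ (c j) ∈ U := by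
    let τ : TopologicalSpace X := TopologicalSpace.induced Ψ inferInstance
    have : SecondCountableTopology X := TopologicalSpace.secondCountableTopology_induced X _ Ψ
    have : Nonempty X := ⟨x0⟩
    refine ⟨TopologicalSpace.denseSeq X, fun U hU x hx => ?_⟩
    exact (TopologicalSpace.denseRange_denseSeq X).exists_mem_open
      (hU.preimage continuous_induced_dom) ⟨x, hx⟩
  have claim : ∀ x, ∀ r : ℝ≥0∞, 0 < r → ∃ j,
      ∫⁻ z, min 1 (edist (K (z, x)) (K (z, c j))) ∂η < r := by
    intro x r hr
    let f : ℕ → Z → ℝ≥0∞ := fun N z => ⨅ n, ⨅ (_ : n ≤ N), min 1 (edist (K (z, x)) (l n))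
    have hfle : ∀ N z n, n ≤ N → f N z ≤ min 1 (edist (K (z, x)) (l n)) :=
      fun N z n hn => iInf₂_le (f := fun n (_ : n ≤ N) => min 1 (edist (K (z, x)) (l n))) n hn
    have hf : ∀ N, Measurable (f N) := by
      intro N
      refine Measurable.iInf fun n => Measurable.iInf fun _ => ?_
      exact measurable_const.min ((hKx x).edist measurable_const)
    have hanti : Antitone f := by
      intro N M hNM z
      exact biInf_mono fun n hn => le_trans hn hNM
    have hfin : ∫⁻ z, f 0 z ∂η ≠ ∞ := by
      refine ne_top_of_le_ne_top ENNReal.one_ne_top ?_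
      calc ∫⁻ z, f 0 z ∂η ≤ ∫⁻ z, 1 ∂η := by
            refine lintegral_mono fun z => ?_
            exact (hfle 0 z 0 le_rfl).trans (min_le_left _ _)
        _ = 1 := by simp
    have hinf : ∀ z, ⨅ N, f N z = 0 := by
      intro z
      refine le_antisymm (ENNReal.le_of_forall_pos_le_add ?_) bot_le
      intro ε hε _
      obtain ⟨n, hn⟩ := hl.exists_dist_lt (K (z, x)) (ε := (ε : ℝ)) (by exact_mod_cast hε)
      refine (iInf_le _ n).trans ((hfle n z n le_rfl).trans ((min_le_right _ _).trans ?_))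
      rw [zero_add, edist_nndist]
      have : nndist (K (z, x)) (l n) < ε := by exact_mod_cast hn
      exact_mod_cast this.le
    have h0 := lintegral_iInf hf hanti hfin
    simp only [hinf, lintegral_zero] at h0
    have hr4 : 0 < r / 2 / 2 := by
      simp [ENNReal.div_pos_iff, hr.ne']
    obtain ⟨N, hN⟩ : ∃ N, ∫⁻ z, f N z ∂η < r / 2 / 2 := by
      rw [h0] at hr4
      exact iInf_lt_iff.mp hr4
    let δ : ℝ≥0∞ := r / 2 / (N + 1 : ℕ)
    have hδ : 0 < δ := by
      have : (N + 1 : ℕ) ≠ (∞ : ℝ≥0∞) := ENNReal.natCast_ne_top _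
      simp only [δ, ENNReal.div_pos_iff]
      exact ⟨by simp [hr.ne'], this⟩
    let U : Set (ℕ → Lp ℝ 1 η) := {ψ | ∀ n ∈ Set.Iic N, edist (ψ n) (Ψ x n) < δ}
    have hU : IsOpen U := by
      have : U = ⋂ n ∈ Set.Iic N, {ψ : ℕ → Lp ℝ 1 η | edist (ψ n) (Ψ x n) < δ} := by
        ext ψ; simp [U]
      rw [this]
      refine (Set.finite_Iic N).isOpen_biInter fun n _ => ?_
      exact isOpen_lt (by fun_prop) continuous_const
    obtain ⟨j, hj⟩ := hc U hU x (fun n _ => by simpa using hδ)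
    refine ⟨j, ?_⟩
    have hj' : ∀ n ∈ Finset.range (N + 1),
        ∫⁻ z, ‖Φ n (K (z, c j)) - Φ n (K (z, x))‖ₑ ∂η < δ := by
      intro n hn
      have := hj n (by simpa [Nat.lt_succ_iff] using hn)
      rw [Lp.edist_toLp_toLp, eLpNorm_one_eq_lintegral_enorm] at this
      exact this
    have hpt : ∀ z, min 1 (edist (K (z, x)) (K (z, c j))) ≤
        2 * f N z + ∑ n ∈ Finset.range (N + 1), ‖Φ n (K (z, c j)) - Φ n (K (z, x))‖ₑ := by
      intro z
      rw [← tsub_le_iff_right, mul_comm, ← ENNReal.div_le_iff (by simp) (by simp)]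
      refine le_iInf₂ fun n hn => ?_
      rw [ENNReal.div_le_iff (by simp) (by simp), tsub_le_iff_right]
      refine (aux_e_tri _ _ (l n)).trans ?_
      have h1 : min 1 (edist (K (z, c j)) (l n)) ≤ min 1 (edist (K (z, x)) (l n)) +
          ‖Φ n (K (z, c j)) - Φ n (K (z, x))‖ₑ := by
        rw [aux_e_ofReal, aux_e_ofReal, ← ofReal_norm,
          ← ENNReal.ofReal_add (le_min zero_le_one dist_nonneg) (norm_nonneg _)]
        refine ENNReal.ofReal_le_ofReal ?_
        have := le_abs_self (Φ n (K (z, c j)) - Φ n (K (z, x)))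
        rw [Real.norm_eq_abs]
        change Φ n (K (z, c j)) ≤ Φ n (K (z, x)) + _
        linarith
      have h2 : ‖Φ n (K (z, c j)) - Φ n (K (z, x))‖ₑ ≤
          ∑ n ∈ Finset.range (N + 1), ‖Φ n (K (z, c j)) - Φ n (K (z, x))‖ₑ :=
        Finset.single_le_sum (f := fun n => ‖Φ n (K (z, c j)) - Φ n (K (z, x))‖ₑ)
          (fun _ _ => bot_le) (by simpa [Nat.lt_succ_iff] using hn)
      rw [mul_two, add_assoc]
      gcongr
      exact h1.trans (by gcongr)
    calc ∫⁻ z, min 1 (edist (K (z, x)) (K (z, c j))) ∂η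
        ≤ ∫⁻ z, (2 * f N z +
          ∑ n ∈ Finset.range (N + 1), ‖Φ n (K (z, c j)) - Φ n (K (z, x))‖ₑ) ∂η :=
          lintegral_mono hpt
      _ = 2 * ∫⁻ z, f N z ∂η + ∑ n ∈ Finset.range (N + 1),
          ∫⁻ z, ‖Φ n (K (z, c j)) - Φ n (K (z, x))‖ₑ ∂η := by
          rw [lintegral_add_left ((hf N).const_mul 2), lintegral_const_mul _ (hf N),
            lintegral_finsetSum]
          intro n _
          exact (((hΦ n).comp (hKx _)).sub ((hΦ n).comp (hKx _))).enorm
      _ < r / 2 + r / 2 := by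
          refine ENNReal.add_lt_add_of_lt_of_le ?_ ?_ ?_
          · exact ENNReal.sum_ne_top.2 fun n hn => (hj' n hn).ne_top
          · rw [mul_comm]
            exact (ENNReal.lt_div_iff_mul_lt (by simp) (by simp)).mp hN
          · calc _ ≤ ∑ n ∈ Finset.range (N + 1), δ := Finset.sum_le_sum fun n hn => (hj' n hn).le
              _ ≤ r / 2 := by
                rw [Finset.sum_const, Finset.card_range, nsmul_eq_mul]
                exact ENNReal.mul_div_le
      _ = r := ENNReal.add_halves r
  have hr2 : 0 < r / 2 := by simp [ENNReal.div_pos_iff, hr.ne']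
  obtain ⟨j, hj⟩ : ∃ j, β {x | ∫⁻ z, min 1 (edist (K (z, x)) (K (z, c j))) ∂η < r / 2} ≠ 0 := by
    by_contra! hcon
    have h1 := measure_iUnion_null hcon
    have h2 : (⋃ j, {x | ∫⁻ z, min 1 (edist (K (z, x)) (K (z, c j))) ∂η < r / 2}) = Set.univ := by
      ext x
      simpa using claim x _ hr2
    rw [h2] at h1
    simp at h1
  intro hz
  have hsub : {x | ∫⁻ z, min 1 (edist (K (z, x)) (K (z, c j))) ∂η < r / 2} ×ˢ
      {x | ∫⁻ z, min 1 (edist (K (z, x)) (K (z, c j))) ∂η < r / 2} ⊆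
      {p : X × X | ∫⁻ z, min 1 (edist (K (z, p.1)) (K (z, p.2))) ∂η < r} := by
    rintro ⟨a, b⟩ ⟨ha, hb⟩
    simp only [Set.mem_ofPred_eq] at ha hb ⊢
    calc _ ≤ ∫⁻ z, (min 1 (edist (K (z, a)) (K (z, c j))) +
            min 1 (edist (K (z, b)) (K (z, c j)))) ∂η :=
          lintegral_mono fun z => aux_e_tri _ _ _
      _ = _ := lintegral_add_left (measurable_const.min ((hKx a).edist (hKx _))) _
      _ < r / 2 + r / 2 := ENNReal.add_lt_add ha hb
      _ = r := ENNReal.add_halves r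
  have h3 := measure_mono_null hsub hz
  rw [Measure.prod_prod] at h3
  exact hj (mul_self_eq_zero.mp h3)

lemma aux_rearrange {A B : Type*} [MeasurableSpace A] [MeasurableSpace B]
    (α : Measure A) [IsProbabilityMeasure α] (β : Measure B) [IsProbabilityMeasure β]
    {Q : B → B → A → A → Prop}
    (hQ : MeasurableSet {t : (B × B) × (A × A) | Q t.1.1 t.1.2 t.2.1 t.2.2})
    (h : ∀ᵐ p ∂(β.prod β), ∀ᵐ z ∂(α.prod α), Q p.1 p.2 z.1 z.2) :
    ∀ᵐ s ∂(α.prod β), ∀ᵐ t ∂(α.prod β), Q s.2 t.2 s.1 t.1 := by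
  have h1 : ∀ᵐ z ∂(α.prod α), ∀ᵐ p ∂(β.prod β), Q p.1 p.2 z.1 z.2 :=
    (Measure.ae_ae_comm hQ).1 h
  have h2 := Measure.ae_ae_of_ae_prod h1
  have hm3 : MeasurableSet {s : (A × B) × (A × B) | Q s.1.2 s.2.2 s.1.1 s.2.1} := by
    have : Measurable (fun s : (A × B) × (A × B) => ((s.1.2, s.2.2), (s.1.1, s.2.1))) := by
      fun_prop
    exact this hQ
  have hm4 : MeasurableSet {s : A × B | ∀ᵐ t ∂(α.prod β), Q s.2 t.2 s.1 t.1} :=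
    aux_measurableSet_ae (Kernel.const (A × B) (α.prod β))
      (Q := fun s t => Q s.2 t.2 s.1 t.1) hm3
  rw [Measure.ae_prod_iff_ae_ae hm4]
  filter_upwards [h2] with x hx
  have hm5 : MeasurableSet {s : A × (B × B) | Q s.2.1 s.2.2 x s.1} := by
    have : Measurable (fun s : A × (B × B) => (s.2, (x, s.1))) := by fun_prop
    exact this hQ
  have h3 := (Measure.ae_ae_comm (p := fun (a : A) (p : B × B) => Q p.1 p.2 x a) hm5).1 hx
  have h4 := Measure.ae_ae_of_ae_prod h3
  filter_upwards [h4] with b hb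
  have hm6 : MeasurableSet {s : A × B | Q b s.2 x s.1} := by
    have : Measurable (fun s : A × B => ((b, s.2), (x, s.1))) := by fun_prop
    exact this hQ
  rw [Measure.ae_prod_iff_ae_ae hm6]
  have hm7 : MeasurableSet {s : B × A | Q b s.1 x s.2} := measurable_swap hm6
  exact (Measure.ae_ae_comm (p := fun (b' : B) (a : A) => Q b b' x a) hm7).1 hb

set_option maxHeartbeats 1000000

/-- Untwisting lemma, asymmetric version.  Let `q0 : X0 → Y` and `q1 : X1 → Y` be
extensions of a p.m.p. `G`-action on `Y`, with `q1` relatively weakly mixing, let `L`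
be a Polish group with bi-invariant metric, `w0, w1` measurable cocycles, and suppose
`F : X0 ⊗_Y X1 → L` satisfies `w0(g,x0) = F(g x0, g x1) w1(g,x1) F(x0,x1)⁻¹` a.e.
Then there are measurable `φ0, φ1` and a measurable cocycle `w` on `Y` with
`F(x0,x1) = φ0(x0)⁻¹ φ1(x1)`, `w(g, q0 x0) = φ0(g x0) w0(g,x0) φ0(x0)⁻¹` and
`w(g, q1 x1) = φ1(g x1) w1(g,x1) φ1(x1)⁻¹` almost everywhere. -/
theorem untwisting_asymmetric
    {G : Type*} [Group G] [Countable G]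
    {Y X₀ X₁ : Type*} [MeasurableSpace Y] [StandardBorelSpace Y]
    [MeasurableSpace X₀] [StandardBorelSpace X₀]
    [MeasurableSpace X₁] [StandardBorelSpace X₁]
    (ν : Measure Y) [IsProbabilityMeasure ν]
    (μ₀ : Measure X₀) [IsProbabilityMeasure μ₀]
    (μ₁ : Measure X₁) [IsProbabilityMeasure μ₁]
    (T : G → Y → Y) (S₀ : G → X₀ → X₀) (S₁ : G → X₁ → X₁)
    (hT_one : ∀ y, T 1 y = y) (hT_mul : ∀ g h y, T (g * h) y = T g (T h y))
    (hT_pmp : ∀ g, MeasurePreserving (T g) ν ν)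
    (hS₀_one : ∀ x, S₀ 1 x = x) (hS₀_mul : ∀ g h x, S₀ (g * h) x = S₀ g (S₀ h x))
    (hS₀_pmp : ∀ g, MeasurePreserving (S₀ g) μ₀ μ₀)
    (hS₁_one : ∀ x, S₁ 1 x = x) (hS₁_mul : ∀ g h x, S₁ (g * h) x = S₁ g (S₁ h x))
    (hS₁_pmp : ∀ g, MeasurePreserving (S₁ g) μ₁ μ₁)
    (q₀ : X₀ → Y) (hq₀ : MeasurePreserving q₀ μ₀ ν)
    (hq₀_equiv : ∀ g : G, ∀ᵐ x ∂μ₀, q₀ (S₀ g x) = T g (q₀ x))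
    (q₁ : X₁ → Y) (hq₁ : MeasurePreserving q₁ μ₁ ν)
    (hq₁_equiv : ∀ g : G, ∀ᵐ x ∂μ₁, q₁ (S₁ g x) = T g (q₁ x))
    (κ₀ : Kernel Y X₀) [IsMarkovKernel κ₀]
    (hκ₀_disint : μ₀ = ν.bind (fun y => κ₀ y))
    (hκ₀_fiber : ∀ᵐ y ∂ν, (κ₀ y) ((q₀ ⁻¹' {y})ᶜ) = 0)
    (κ₁ : Kernel Y X₁) [IsMarkovKernel κ₁]
    (hκ₁_disint : μ₁ = ν.bind (fun y => κ₁ y))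
    (hκ₁_fiber : ∀ᵐ y ∂ν, (κ₁ y) ((q₁ ⁻¹' {y})ᶜ) = 0)
    (joint : Measure (X₀ × X₁))
    (h_joint : joint = ν.bind (fun y => (κ₀ y).prod (κ₁ y)))
    (selfProd₁ : Measure (X₁ × X₁))
    (h_selfProd₁ : selfProd₁ = ν.bind (fun y => (κ₁ y).prod (κ₁ y)))
    (h_rwm : ∀ A : Set (X₁ × X₁), MeasurableSet A →
      (∀ g : G, (fun p : X₁ × X₁ => (S₁ g p.1, S₁ g p.2)) ⁻¹' A =ᵐ[selfProd₁] A) →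
      ∃ B : Set Y, MeasurableSet B ∧ A =ᵐ[selfProd₁] ((fun p : X₁ × X₁ => q₁ p.1) ⁻¹' B))
    {L : Type*} [Group L] [MetricSpace L] [CompleteSpace L]
    [TopologicalSpace.SeparableSpace L] [MeasurableSpace L] [BorelSpace L]
    (h_dist_left : ∀ a b c : L, dist (c * a) (c * b) = dist a b)
    (h_dist_right : ∀ a b c : L, dist (a * c) (b * c) = dist a b)
    (w₀ : G → X₀ → L) (hw₀ : IsCocycle μ₀ S₀ w₀)
    (w₁ : G → X₁ → L) (hw₁ : IsCocycle μ₁ S₁ w₁)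
    (F : X₀ × X₁ → L) (hF : Measurable F)
    (h_main : ∀ g : G, ∀ᵐ p ∂joint,
      w₀ g p.1 = F (S₀ g p.1, S₁ g p.2) * w₁ g p.2 * (F p)⁻¹) :
    ∃ (φ₀ : X₀ → L) (φ₁ : X₁ → L) (w : G → Y → L),
      Measurable φ₀ ∧ Measurable φ₁ ∧ IsCocycle ν T w ∧
      (∀ᵐ p ∂joint, F p = (φ₀ p.1)⁻¹ * φ₁ p.2) ∧
      (∀ g : G, ∀ᵐ x ∂μ₀, w g (q₀ x) = φ₀ (S₀ g x) * w₀ g x * (φ₀ x)⁻¹) ∧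
      (∀ g : G, ∀ᵐ x ∂μ₁, w g (q₁ x) = φ₁ (S₁ g x) * w₁ g x * (φ₁ x)⁻¹) := by
  -- `L` is a second countable topological group
  have : SecondCountableTopology L := UniformSpace.secondCountable_of_separable L
  have : ContinuousMul L := ⟨by
    rw [Metric.continuous_iff]
    intro b ε hε
    refine ⟨ε / 2, by positivity, fun a ha => ?_⟩
    rw [Prod.dist_eq, max_lt_iff] at ha
    calc dist (a.1 * a.2) (b.1 * b.2) ≤ dist (a.1 * a.2) (b.1 * a.2)
          + dist (b.1 * a.2) (b.1 * b.2) := dist_triangle _ _ _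
      _ = dist a.1 b.1 + dist a.2 b.2 := by rw [h_dist_left, h_dist_right]
      _ < ε := by linarith [ha.1, ha.2]⟩
  have hinv : ∀ a b : L, dist a⁻¹ b⁻¹ = dist a b := by
    intro a b
    rw [← h_dist_left a⁻¹ b⁻¹ a, ← h_dist_right _ _ b, dist_comm]
    simp
  have : ContinuousInv L := ⟨by
    rw [Metric.continuous_iff]
    intro b ε hε
    exact ⟨ε, hε, fun a ha => by rwa [hinv]⟩⟩
  -- basic measurability
  have mS₀ : ∀ g, Measurable (S₀ g) := fun g => (hS₀_pmp g).measurable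
  have mS₁ : ∀ g, Measurable (S₁ g) := fun g => (hS₁_pmp g).measurable
  have mT : ∀ g, Measurable (T g) := fun g => (hT_pmp g).measurable
  have mq₀ := hq₀.measurable
  have mq₁ := hq₁.measurable
  have mw₀ := hw₀.1
  have mw₁ := hw₁.1
  have fib₀ : ∀ᵐ y ∂ν, ∀ᵐ x ∂(κ₀ y), q₀ x = y := hκ₀_fiber
  have fib₁ : ∀ᵐ y ∂ν, ∀ᵐ x ∂(κ₁ y), q₁ x = y := hκ₁_fiber
  have eq₀ := aux_equivariant ν μ₀ T S₀ hT_one hT_mul hT_pmp hS₀_pmp q₀ mq₀ hq₀_equiv κ₀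
    hκ₀_disint fib₀
  have eq₁ := aux_equivariant ν μ₁ T S₁ hT_one hT_mul hT_pmp hS₁_pmp q₁ mq₁ hq₁_equiv κ₁
    hκ₁_disint fib₁
  have h_joint' : joint = ν.bind (fun y => (κ₀ ×ₖ κ₁) y) := by
    simp only [Kernel.prod_apply]; exact h_joint
  have h_self' : selfProd₁ = ν.bind (fun y => (κ₁ ×ₖ κ₁) y) := by
    simp only [Kernel.prod_apply]; exact h_selfProd₁
  have joint_iff : ∀ {P : X₀ × X₁ → Prop}, MeasurableSet {p | P p} →
      ((∀ᵐ p ∂joint, P p) ↔ ∀ᵐ y ∂ν, ∀ᵐ p ∂((κ₀ y).prod (κ₁ y)), P p) := by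
    intro P hP
    rw [h_joint', aux_ae_bind_iff ν _ hP]
    simp only [Kernel.prod_apply]
  have self_iff : ∀ {P : X₁ × X₁ → Prop}, MeasurableSet {p | P p} →
      ((∀ᵐ p ∂selfProd₁, P p) ↔ ∀ᵐ y ∂ν, ∀ᵐ p ∂((κ₁ y).prod (κ₁ y)), P p) := by
    intro P hP
    rw [h_self', aux_ae_bind_iff ν _ hP]
    simp only [Kernel.prod_apply]
  have iff₀ : ∀ {P : X₀ → Prop}, MeasurableSet {p | P p} →
      ((∀ᵐ x ∂μ₀, P x) ↔ ∀ᵐ y ∂ν, ∀ᵐ x ∂(κ₀ y), P x) := by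
    intro P hP
    rw [hκ₀_disint, aux_ae_bind_iff ν _ hP]
  have iff₁ : ∀ {P : X₁ → Prop}, MeasurableSet {p | P p} →
      ((∀ᵐ x ∂μ₁, P x) ↔ ∀ᵐ y ∂ν, ∀ᵐ x ∂(κ₁ y), P x) := by
    intro P hP
    rw [hκ₁_disint, aux_ae_bind_iff ν _ hP]
  have mmain : ∀ g, MeasurableSet {p : X₀ × X₁ |
      w₀ g p.1 = F (S₀ g p.1, S₁ g p.2) * w₁ g p.2 * (F p)⁻¹} := by
    intro g
    have := mS₀ g; have := mS₁ g; have := mw₀ g; have := mw₁ g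
    exact measurableSet_eq_fun (by fun_prop) (by fun_prop)
  have main' : ∀ g, ∀ᵐ y ∂ν, ∀ᵐ p ∂((κ₀ y).prod (κ₁ y)),
      w₀ g p.1 = F (S₀ g p.1, S₁ g p.2) * w₁ g p.2 * (F p)⁻¹ :=
    fun g => (joint_iff (mmain g)).1 (h_main g)
  -- the invariant pseudometric
  let K : (X₀ × X₀) × X₁ → L := fun t => F (t.1.2, t.2) * (F (t.1.1, t.2))⁻¹
  have mK : Measurable K := by fun_prop
  let k : X₁ × X₁ → ℝ≥0∞ := fun p =>
    ∫⁻ z, min 1 (edist (K (z, p.1)) (K (z, p.2))) ∂((κ₀ (q₁ p.1)).prod (κ₀ (q₁ p.1)))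
  have mk : Measurable k := by
    let kk : Kernel (X₁ × X₁) (X₀ × X₀) :=
      (κ₀ ×ₖ κ₀).comap (fun p => q₁ p.1) (mq₁.comp measurable_fst)
    have h1 : Measurable (fun t : (X₁ × X₁) × (X₀ × X₀) =>
        min 1 (edist (K (t.2, t.1.1)) (K (t.2, t.1.2)))) := by
      refine measurable_const.min (Measurable.edist ?_ ?_) <;> fun_prop
    have h2 := Measurable.lintegral_kernel_prod_right' (κ := kk) h1
    simpa only [kk, Kernel.comap_apply, Kernel.prod_apply] using h2
  have e_inv : ∀ a b c d : L, edist (c * a * d) (c * b * d) = edist a b := by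
    intro a b c d
    rw [edist_dist, edist_dist, h_dist_right, h_dist_left]
  have k_inv : ∀ g, ∀ᵐ p ∂selfProd₁, k (S₁ g p.1, S₁ g p.2) = k p := by
    intro g
    have := mS₁ g
    rw [self_iff (measurableSet_eq_fun (by fun_prop) mk)]
    have hq' : ∀ᵐ y ∂ν, ∀ᵐ x ∂(κ₁ y), q₁ (S₁ g x) = T g (q₁ x) := by
      refine (iff₁ (measurableSet_eq_fun (by fun_prop) ?_)).1 (hq₁_equiv g)
      exact (mT g).comp mq₁
    filter_upwards [eq₀ g, fib₁, hq', main' g] with y hy0 hy1 hyq hym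
    have hym' := (Measure.ae_ae_comm (p := fun (a : X₀) (b : X₁) =>
      w₀ g a = F (S₀ g a, S₁ g b) * w₁ g b * (F (a, b))⁻¹) (mmain g)).1
        (Measure.ae_ae_of_ae_prod hym)
    have hall := hy1.and (hyq.and hym')
    filter_upwards [Measure.quasiMeasurePreserving_fst.ae hall,
      Measure.quasiMeasurePreserving_snd.ae hall] with p hp1 hp2
    obtain ⟨a1, b1, c1⟩ := hp1
    obtain ⟨-, -, c2⟩ := hp2
    simp only [k]
    rw [b1, a1, hy0, Measure.map_prod_map _ _ (mS₀ g) (mS₀ g)]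
    have mS := mS₀ g
    rw [lintegral_map]
    rotate_left
    · refine measurable_const.min (Measurable.edist ?_ ?_) <;> fun_prop
    · fun_prop
    refine lintegral_congr_ae ?_
    filter_upwards [Measure.quasiMeasurePreserving_fst.ae (c1.and c2),
      Measure.quasiMeasurePreserving_snd.ae (c1.and c2)] with z hz1 hz2
    have alg : ∀ a b, w₀ g a = F (S₀ g a, S₁ g b) * w₁ g b * (F (a, b))⁻¹ →
        F (S₀ g a, S₁ g b) = w₀ g a * F (a, b) * (w₁ g b)⁻¹ := by
      intro a b h; rw [h]; group
    have alg2 : ∀ b, w₀ g z.1 = F (S₀ g z.1, S₁ g b) * w₁ g b * (F (z.1, b))⁻¹ →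
        w₀ g z.2 = F (S₀ g z.2, S₁ g b) * w₁ g b * (F (z.2, b))⁻¹ →
        K (Prod.map (S₀ g) (S₀ g) z, S₁ g b) = w₀ g z.2 * K (z, b) * (w₀ g z.1)⁻¹ := by
      intro b h1 h2
      simp only [K, Prod.map_fst, Prod.map_snd]
      rw [alg _ _ h1, alg _ _ h2]
      group
    rw [alg2 _ hz1.1 hz2.1, alg2 _ hz1.2 hz2.2, e_inv]
  -- `k` vanishes almost everywhere
  have k_small : ∀ n : ℕ, ∀ᵐ y ∂ν, ∀ᵐ p ∂((κ₁ y).prod (κ₁ y)), k p < ((n : ℝ≥0∞) + 1)⁻¹ := by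
    intro n
    have hA : MeasurableSet {p | k p < ((n : ℝ≥0∞) + 1)⁻¹} := measurableSet_lt mk measurable_const
    obtain ⟨B, hB, hAB⟩ := h_rwm _ hA (by
      intro g
      filter_upwards [k_inv g] with p hp
      apply propext
      change k (S₁ g p.1, S₁ g p.2) < _ ↔ k p < _
      rw [hp])
    have hAB' : ∀ᵐ p ∂selfProd₁, (k p < ((n : ℝ≥0∞) + 1)⁻¹ ↔ q₁ p.1 ∈ B) := by
      filter_upwards [hAB] with p hp
      exact iff_of_eq hp
    have hm : MeasurableSet {p | (k p < ((n : ℝ≥0∞) + 1)⁻¹ ↔ q₁ p.1 ∈ B)} :=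
      hA.iff ((mq₁.comp measurable_fst) hB)
    rw [self_iff hm] at hAB'
    filter_upwards [hAB', fib₁] with y hy hyf
    have hyf' := Measure.quasiMeasurePreserving_fst (μ := κ₁ y) (ν := κ₁ y).ae hyf
    by_cases hyB : y ∈ B
    · filter_upwards [hy, hyf'] with p h1 h2
      rw [h1, h2]; exact hyB
    · exfalso
      refine aux_sep ((κ₀ y).prod (κ₀ y)) (κ₁ y) K mK (((n : ℝ≥0∞) + 1)⁻¹) (by simp) ?_
      rw [measure_eq_zero_iff_ae_notMem]
      filter_upwards [hy, hyf'] with p h1 h2 h3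
      apply hyB
      rw [← h2, ← h1]
      simp only [k]
      rw [h2]
      exact h3
  have k_zero : ∀ᵐ y ∂ν, ∀ᵐ s ∂((κ₀ y).prod (κ₁ y)), ∀ᵐ t ∂((κ₀ y).prod (κ₁ y)),
      F (t.1, s.2) * (F (s.1, s.2))⁻¹ = F (t.1, t.2) * (F (s.1, t.2))⁻¹ := by
    filter_upwards [ae_all_iff.2 k_small, fib₁] with y hy hyf
    have hyf' := Measure.quasiMeasurePreserving_fst (μ := κ₁ y) (ν := κ₁ y).ae hyf
    refine aux_rearrange (κ₀ y) (κ₁ y) (Q := fun b b' a a' =>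
      F (a', b) * (F (a, b))⁻¹ = F (a', b') * (F (a, b'))⁻¹) ?_ ?_
    · exact measurableSet_eq_fun (by fun_prop) (by fun_prop)
    filter_upwards [ae_all_iff.2 hy, hyf'] with p hp hpf
    have hk : k p = 0 := by
      by_contra hne
      obtain ⟨n, hn⟩ := ENNReal.exists_inv_nat_lt hne
      refine lt_irrefl _ ((hp n).trans (lt_of_le_of_lt ?_ hn))
      exact ENNReal.inv_le_inv.2 le_self_add
    simp only [k] at hk
    rw [hpf, lintegral_eq_zero_iff (by
      refine measurable_const.min (Measurable.edist ?_ ?_) <;> fun_prop)] at hk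
    filter_upwards [hk] with z hz
    have hz' : min 1 (edist (K (z, p.1)) (K (z, p.2))) = 0 := hz
    rcases min_eq_bot.1 hz' with h | h
    · exact absurd h (by simp)
    · exact edist_eq_zero.1 h
  -- choose sections
  have hQm : MeasurableSet {r : (X₀ × X₁) × (X₀ × X₁) |
      F (r.2.1, r.1.2) * (F (r.1.1, r.1.2))⁻¹ = F (r.2.1, r.2.2) * (F (r.1.1, r.2.2))⁻¹} :=
    measurableSet_eq_fun (by fun_prop) (by fun_prop)
  obtain ⟨s, ms, hs⟩ := aux_sel2 ν (κ₀ ×ₖ κ₁) (κ₀ ×ₖ κ₁)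
    (Q := fun s t => F (t.1, s.2) * (F (s.1, s.2))⁻¹ = F (t.1, t.2) * (F (s.1, t.2))⁻¹) hQm
    (by simpa only [Kernel.prod_apply] using k_zero)
  simp only [Kernel.prod_apply] at hs
  let φ₀ : X₀ → L := fun x => (F (x, (s (q₀ x)).2) * (F (s (q₀ x)))⁻¹)⁻¹
  let φ₁ : X₁ → L := fun x => F ((s (q₁ x)).1, x)
  have mφ₀ : Measurable φ₀ := by fun_prop
  have mφ₁ : Measurable φ₁ := by fun_prop
  have hFm : MeasurableSet {p | F p = (φ₀ p.1)⁻¹ * φ₁ p.2} :=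
    measurableSet_eq_fun (by fun_prop) (by fun_prop)
  have hFy : ∀ᵐ y ∂ν, ∀ᵐ p ∂((κ₀ y).prod (κ₁ y)), F p = (φ₀ p.1)⁻¹ * φ₁ p.2 := by
    filter_upwards [hs, fib₀, fib₁] with y hy h0 h1
    filter_upwards [hy, Measure.quasiMeasurePreserving_fst.ae h0,
      Measure.quasiMeasurePreserving_snd.ae h1] with t ht ht0 ht1
    simp only [φ₀, φ₁, ht0, ht1, inv_inv]
    have : F (s y) = F ((s y).1, (s y).2) := rfl
    rw [this, ht]
    simp
  have hab : ∀ g, ∀ᵐ y ∂ν, ∀ᵐ p ∂((κ₀ y).prod (κ₁ y)),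
      φ₀ (S₀ g p.1) * w₀ g p.1 * (φ₀ p.1)⁻¹ = φ₁ (S₁ g p.2) * w₁ g p.2 * (φ₁ p.2)⁻¹ := by
    intro g
    filter_upwards [hFy, (hT_pmp g).quasiMeasurePreserving.ae hFy, eq₀ g, eq₁ g, main' g]
      with y h1 h2 e0 e1 h3
    rw [e0, e1, Measure.map_prod_map _ _ (mS₀ g) (mS₁ g)] at h2
    have h2' := ae_of_ae_map ((mS₀ g).prodMap (mS₁ g)).aemeasurable h2
    filter_upwards [h1, h2', h3] with p a b c
    have b' : F (S₀ g p.1, S₁ g p.2) = (φ₀ (S₀ g p.1))⁻¹ * φ₁ (S₁ g p.2) := b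
    rw [c, b', a]
    group
  have hw : ∀ g, ∃ wg : Y → L, Measurable wg ∧
      (∀ᵐ x ∂μ₀, wg (q₀ x) = φ₀ (S₀ g x) * w₀ g x * (φ₀ x)⁻¹) ∧
      (∀ᵐ x ∂μ₁, wg (q₁ x) = φ₁ (S₁ g x) * w₁ g x * (φ₁ x)⁻¹) := by
    intro g
    have := mS₀ g; have := mS₁ g; have := mw₀ g; have := mw₁ g
    have ma : Measurable (fun x => φ₀ (S₀ g x) * w₀ g x * (φ₀ x)⁻¹) := by fun_prop
    have mb : Measurable (fun x => φ₁ (S₁ g x) * w₁ g x * (φ₁ x)⁻¹) := by fun_prop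
    obtain ⟨σ, mσ, hσ⟩ := aux_sel2 ν κ₀ κ₁ (Q := fun a b =>
        φ₀ (S₀ g a) * w₀ g a * (φ₀ a)⁻¹ = φ₁ (S₁ g b) * w₁ g b * (φ₁ b)⁻¹)
      (measurableSet_eq_fun (ma.comp measurable_fst) (mb.comp measurable_snd))
      (by filter_upwards [hab g] with y hy using Measure.ae_ae_of_ae_prod hy)
    refine ⟨fun y => φ₀ (S₀ g (σ y)) * w₀ g (σ y) * (φ₀ (σ y))⁻¹, ma.comp mσ, ?_, ?_⟩
    · refine (iff₀ (P := fun x => φ₀ (S₀ g (σ (q₀ x))) * w₀ g (σ (q₀ x)) * (φ₀ (σ (q₀ x)))⁻¹ = φ₀ (S₀ g x) * w₀ g x * (φ₀ x)⁻¹) (measurableSet_eq_fun ((ma.comp mσ).comp mq₀) ma)).2 ?_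
      filter_upwards [hσ, fib₀, hab g] with y h1 h2 h3
      filter_upwards [h2, Measure.ae_ae_of_ae_prod h3] with x hx hx3
      obtain ⟨b, hb1, hb2⟩ := (h1.and hx3).exists
      rw [hx, hb1, hb2]
    · refine (iff₁ (P := fun x => φ₀ (S₀ g (σ (q₁ x))) * w₀ g (σ (q₁ x)) * (φ₀ (σ (q₁ x)))⁻¹ = φ₁ (S₁ g x) * w₁ g x * (φ₁ x)⁻¹) (measurableSet_eq_fun ((ma.comp mσ).comp mq₁) mb)).2 ?_
      filter_upwards [hσ, fib₁] with y h1 h2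
      filter_upwards [h1, h2] with x hx hx2
      rw [hx2, hx]
  choose w mw hw0 hw1 using hw
  refine ⟨φ₀, φ₁, w, mφ₀, mφ₁, ⟨mw, ?_⟩, (joint_iff hFm).2 hFy, hw0, hw1⟩
  intro g h
  have hm : MeasurableSet {y | w (g * h) y = w g (T h y) * w h y} := by
    have := mw (g * h); have := mw g; have := mw h; have := mT h
    exact measurableSet_eq_fun (by fun_prop) (by fun_prop)
  rw [← hq₀.map_eq, ae_map_iff mq₀.aemeasurable hm]
  filter_upwards [hw0 (g * h), hw0 h, (hS₀_pmp h).quasiMeasurePreserving.ae (hw0 g),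
    hq₀_equiv h, hw₀.2 g h] with x a b c d e
  rw [a, b, ← d, c, e, hS₀_mul]
  group
end

section
/- Let R be an ergodic measure-preserving countable Borel equivalence relation on a standard probability space (X, μ), and let A, B ⊆ X be Borel sets with μ(A) = μ(B) > 0. Then, after discarding a null set, there exists a Borel bijection θ : A → B whose graph is contained in R. -/
open MeasureTheory
open scoped ENNReal

theorem aux_selection {X : Type*} [TopologicalSpace X] [T3Space X] [MeasurableSpace X]
    [BorelSpace X] (μ : Measure X) [IsFiniteMeasure μ] (h : (ℕ → ℕ) → X) (hh : Continuous h) :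
    ∃ (T : Set X) (s : X → (ℕ → ℕ)), MeasurableSet T ∧ Measurable s ∧
      (∀ x ∈ T, h (s x) = x) ∧ μ (Set.range h \ T) = 0 := by
  classical
  let A : List ℕ → Set X := fun w => h '' {z | PiNat.res z w.length = w}
  let H : List ℕ → Set X := fun w => toMeasurable μ (A w) ∩ closure (A w)
  have hHm : ∀ w, MeasurableSet (H w) := fun w =>
    (measurableSet_toMeasurable _ _).inter isClosed_closure.measurableSet
  have hAH : ∀ w, A w ⊆ H w := fun w => Set.subset_inter (subset_toMeasurable _ _) subset_closure
  have hAU : ∀ w, A w ⊆ ⋃ n, H (n :: w) := by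
    rintro w _ ⟨z, hz, rfl⟩
    refine Set.mem_iUnion.2 ⟨z w.length, hAH _ ⟨z, ?_, rfl⟩⟩
    simp only [Set.mem_ofPred_eq] at hz ⊢
    simp [PiNat.res_succ, hz]
  have hnull : ∀ w, μ (H w \ ⋃ n, H (n :: w)) = 0 := by
    intro w
    have hm : MeasurableSet (⋃ n, H (n :: w))ᶜ := (MeasurableSet.iUnion fun n => hHm _).compl
    have h1 : μ (toMeasurable μ (A w) ∩ (⋃ n, H (n :: w))ᶜ) = 0 := by
      rw [Measure.measure_toMeasurable_inter hm (measure_ne_top _ _)]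
      have : A w ∩ (⋃ n, H (n :: w))ᶜ = ∅ := by
        rw [← Set.diff_eq]; exact Set.diff_eq_empty.2 (hAU w)
      rw [this]; simp
    refine measure_mono_null ?_ h1
    exact fun x hx => ⟨hx.1.1, hx.2⟩
  let N : Set X := ⋃ w, (H w \ ⋃ n, H (n :: w))
  have hN : μ N = 0 := measure_iUnion_null hnull
  have hNm : MeasurableSet N :=
    MeasurableSet.iUnion fun w => (hHm w).diff (MeasurableSet.iUnion fun n => hHm _)
  let nxt : X → List ℕ → ℕ := fun x w => sInf {n | x ∈ H (n :: w)}
  let word : X → ℕ → List ℕ := fun x k => Nat.rec [] (fun _ w => nxt x w :: w) k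
  have word_succ : ∀ x k, word x (k+1) = nxt x (word x k) :: word x k := fun x k => rfl
  let s : X → ℕ → ℕ := fun x k => nxt x (word x k)
  have hnxt : ∀ w n, MeasurableSet {x | nxt x w = n} := by
    intro w n
    have : {x | nxt x w = n} = (H (n :: w) ∩ ⋂ m, ⋂ (_ : m < n), (H (m :: w))ᶜ) ∪
        ({x | n = 0} ∩ ⋂ m, (H (m :: w))ᶜ) := by
      ext x
      simp only [Set.mem_ofPred_eq, Set.mem_union, Set.mem_inter_iff, Set.mem_iInter,
        Set.mem_compl_iff, nxt]
      constructor
      · rintro rfl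
        by_cases hne : {n | x ∈ H (n :: w)}.Nonempty
        · exact Or.inl ⟨Nat.sInf_mem hne, fun m hm hx => Nat.notMem_of_lt_sInf hm hx⟩
        · rw [Set.not_nonempty_iff_eq_empty] at hne
          right
          refine ⟨by rw [hne]; simp, fun m hm => ?_⟩
          have : m ∈ {n | x ∈ H (n :: w)} := hm
          rw [hne] at this; exact this
      · rintro (⟨h1, h2⟩ | ⟨rfl, h2⟩)
        · apply le_antisymm (Nat.sInf_le h1)
          by_contra! hlt
          exact h2 _ hlt (Nat.sInf_mem (s := {n | x ∈ H (n :: w)}) ⟨n, h1⟩)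
        · have : {n | x ∈ H (n :: w)} = ∅ := by ext m; simpa using h2 m
          rw [this]; simp
    rw [this]
    refine ((hHm _).inter ?_).union ((MeasurableSet.const _).inter ?_)
    · exact MeasurableSet.iInter fun m => MeasurableSet.iInter fun _ => (hHm _).compl
    · exact MeasurableSet.iInter fun m => (hHm _).compl
  have hword : ∀ k w, MeasurableSet {x | word x k = w} := by
    intro k
    induction k with
    | zero => intro w; exact MeasurableSet.const ([] = w)
    | succ k ih =>
      intro w
      cases w with
      | nil => simp [word_succ]
      | cons n w =>
        have : {x | word x (k+1) = n :: w} = {x | nxt x w = n} ∩ {x | word x k = w} := by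
          ext x
          simp only [word_succ, List.cons.injEq, Set.mem_ofPred_eq, Set.mem_inter_iff]
          constructor
          · rintro ⟨h1, h2⟩; rw [h2] at h1; exact ⟨h1, h2⟩
          · rintro ⟨h1, h2⟩; rw [h2]; exact ⟨h1, rfl⟩
        rw [this]
        exact (hnxt w n).inter (ih w)
  have hs : Measurable s := by
    refine measurable_pi_lambda _ fun k => measurable_to_countable' fun n => ?_
    have : (fun x => s x k) ⁻¹' {n} = ⋃ w, ({x | word x k = w} ∩ {x | nxt x w = n}) := by
      ext x; simp [s]
    rw [this]
    exact MeasurableSet.iUnion fun w => (hword k w).inter (hnxt w n)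
  have hres : ∀ x k, PiNat.res (s x) k = word x k := by
    intro x k
    induction k with
    | zero => rfl
    | succ k ih => rw [PiNat.res_succ, ih]
  refine ⟨H [] \ N, s, (hHm _).diff hNm, hs, ?_, ?_⟩
  · rintro x ⟨hx, hxN⟩
    have hxw : ∀ k, x ∈ H (word x k) := by
      intro k
      induction k with
      | zero => exact hx
      | succ k ih =>
        have : x ∈ ⋃ n, H (n :: word x k) := by
          by_contra hcon
          exact hxN (Set.mem_iUnion.2 ⟨_, ih, hcon⟩)
        rw [Set.mem_iUnion] at this
        exact Nat.sInf_mem (s := {n | x ∈ H (n :: word x k)}) this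
    by_contra hne
    have h1 : ({x}ᶜ : Set X) ∈ nhds (h (s x)) := isOpen_compl_singleton.mem_nhds hne
    obtain ⟨V, ⟨hV, hVc⟩, hVx⟩ := (closed_nhds_basis (h (s x))).mem_iff.1 h1
    have h2 : h ⁻¹' V ∈ nhds (s x) := hh.continuousAt hV
    obtain ⟨t, ⟨y, n, rfl⟩, hzt, htV⟩ :=
      ((PiNat.isTopologicalBasis_cylinders (fun _ => ℕ)).mem_nhds_iff).1 h2
    rw [PiNat.mem_cylinder_iff_eq] at hzt
    rw [← hzt, PiNat.cylinder_eq_res] at htV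
    have h3 : A (word x n) ⊆ V := by
      rintro _ ⟨z, hz, rfl⟩
      apply htV
      simp only [Set.mem_ofPred_eq] at hz ⊢
      rw [hres, ← hz, ← hres, PiNat.res_length]
    exact hVx (closure_minimal h3 hVc (hxw n).2) rfl
  · refine measure_mono_null ?_ hN
    rintro _ ⟨⟨z, rfl⟩, hz⟩
    by_contra hzN
    exact hz ⟨hAH [] ⟨z, rfl, rfl⟩, hzN⟩

/-- Borel map with graph in a relation with countable sections: injective on a positive piece. -/
theorem aux_injective_piece {X : Type*} [MeasurableSpace X] [StandardBorelSpace X]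
    (μ : Measure X) [IsFiniteMeasure μ] (R : Set (X × X)) (hR : MeasurableSet R)
    (hRc : ∀ x : X, {y : X | (x, y) ∈ R}.Countable) (T : Set X) (hT : MeasurableSet T)
    (f : X → X) (hf : Measurable f) (hfR : ∀ x ∈ T, (f x, x) ∈ R) (hpos : μ T ≠ 0) :
    ∃ P ⊆ T, MeasurableSet P ∧ Set.InjOn f P ∧ μ P ≠ 0 := by
  let := upgradeStandardBorel X
  obtain ⟨x0, -⟩ : T.Nonempty := nonempty_of_measure_ne_zero hpos
  have : Nonempty X := ⟨x0⟩
  have hfm : Measurable fun x => (f x, x) := hf.prodMk measurable_id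
  let ρ : Measure (X × X) := (μ.restrict T).map fun x => (f x, x)
  let κ := ρ.condKernel
  have hρ : ρ.fst.compProd κ = ρ := ρ.disintegrate _
  have hρR : ρ Rᶜ = 0 := by
    rw [Measure.map_apply hfm hR.compl, Measure.restrict_apply (hfm hR.compl)]
    have : ((fun x => (f x, x)) ⁻¹' Rᶜ) ∩ T = ∅ := by
      ext x; simp only [Set.mem_inter_iff, Set.mem_preimage, Set.mem_compl_iff,
        Set.mem_empty_iff_false, iff_false, not_and, not_not]
      intro h hx; exact h (hfR x hx)
    rw [this]; simp
  have hk1 : Measurable fun p : X × X => κ p.1 {p.2} := by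
    have hm : MeasurableSet {q : (X × X) × X | q.2 = q.1.2} :=
      measurableSet_eq_fun measurable_snd (measurable_snd.comp measurable_fst)
    exact ProbabilityTheory.Kernel.measurable_kernel_prodMk_left
      (κ := κ.comap Prod.fst measurable_fst) hm
  have hZ : MeasurableSet {p : X × X | κ p.1 {p.2} = 0} := hk1 (measurableSet_singleton 0)
  have hae : ∀ᵐ y ∂ρ.fst, κ y {x | (y, x) ∉ R} = 0 := by
    rw [← hρ, Measure.compProd_apply hR.compl, lintegral_eq_zero_iff
      (ProbabilityTheory.Kernel.measurable_kernel_prodMk_left hR.compl)] at hρR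
    exact hρR
  have hρZ : ρ {p : X × X | κ p.1 {p.2} = 0} = 0 := by
    rw [← hρ, Measure.compProd_apply hZ, lintegral_eq_zero_iff
      (ProbabilityTheory.Kernel.measurable_kernel_prodMk_left hZ)]
    filter_upwards [hae] with y hy
    have hc : ({x | (y, x) ∈ R} ∩ {x | κ y {x} = 0}).Countable := (hRc y).mono Set.inter_subset_left
    have h0 : κ y ({x | (y, x) ∈ R} ∩ {x | κ y {x} = 0}) = 0 := by
      rw [← Set.biUnion_of_singleton ({x | (y, x) ∈ R} ∩ {x | κ y {x} = 0}),
        measure_biUnion_null_iff hc]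
      exact fun x hx => hx.2
    refine measure_mono_null ?_ (measure_union_null hy h0)
    intro x hx
    by_cases hxR : (y, x) ∈ R
    · exact Or.inr ⟨hxR, hx⟩
    · exact Or.inl hxR
  have hμZ : μ (T ∩ {x | κ (f x) {x} = 0}) = 0 := by
    rw [Measure.map_apply hfm hZ, Measure.restrict_apply (hfm hZ)] at hρZ
    rw [Set.inter_comm]; exact hρZ
  let b := TopologicalSpace.countableBasis X
  let P : Set X → Set X := fun V => T ∩ V ∩ {x | κ (f x) V < 2 * κ (f x) {x}}
  have hcov : T ⊆ (T ∩ {x | κ (f x) {x} = 0}) ∪ ⋃ V ∈ b, P V := by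
    intro x hx
    by_cases h0 : κ (f x) {x} = 0
    · exact Or.inl ⟨hx, h0⟩
    · right
      have hlt : κ (f x) {x} < 2 * κ (f x) {x} := by
        rw [two_mul]; exact ENNReal.lt_add_right (measure_ne_top _ _) h0
      obtain ⟨U, hxU, hU, hUlt⟩ := Set.exists_isOpen_lt_of_lt _ _ hlt
      obtain ⟨V, hV, hxV, hVU⟩ := (TopologicalSpace.isBasis_countableBasis X).exists_subset_of_mem_open
        (hxU rfl) hU
      exact Set.mem_biUnion hV ⟨⟨hx, hxV⟩, (measure_mono hVU).trans_lt hUlt⟩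
  have hex : ∃ V ∈ b, μ (P V) ≠ 0 := by
    by_contra! hcon
    exact hpos (measure_mono_null hcov (measure_union_null hμZ
      ((measure_biUnion_null_iff (TopologicalSpace.countable_countableBasis X)).2 hcon)))
  obtain ⟨V, hV, hP⟩ := hex
  have hVm : MeasurableSet V := (TopologicalSpace.isOpen_of_mem_countableBasis hV).measurableSet
  refine ⟨P V, fun x hx => hx.1.1, ?_, ?_, hP⟩
  · refine (hT.inter hVm).inter (measurableSet_lt ?_ ?_)
    · exact (κ.measurable_coe hVm).comp hf
    · exact (hk1.comp hfm).const_mul _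
  · rintro x ⟨⟨_, hx⟩, hx2⟩ x' ⟨⟨_, hx'⟩, hx2'⟩ hff
    by_contra hne
    simp only [Set.mem_ofPred_eq] at hx2 hx2'
    rw [← hff] at hx2'
    have h1 : κ (f x) {x} + κ (f x) {x'} ≤ κ (f x) V := by
      rw [← measure_union (by simpa using hne) (measurableSet_singleton _)]
      apply measure_mono
      rintro z (rfl | rfl) <;> assumption
    have h2 : κ (f x) V + κ (f x) V < 2 * κ (f x) {x} + 2 * κ (f x) {x'} := ENNReal.add_lt_add hx2 hx2'
    rw [← mul_add, ← two_mul] at h2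
    exact absurd (mul_le_mul_right h1 2) (not_le.2 h2)

theorem aux_invariant_sep {X : Type*} [MeasurableSpace X] [StandardBorelSpace X]
    (R : Set (X × X)) (hR : MeasurableSet R)
    (hE : Equivalence (fun x y : X => (x, y) ∈ R)) (C D : Set X) (hC : MeasurableSet C)
    (hD : MeasurableSet D) (hCD : ∀ x ∈ C, ∀ y ∈ D, (x, y) ∉ R) :
    ∃ I, MeasurableSet I ∧ (∀ x y : X, (x, y) ∈ R → (x ∈ I ↔ y ∈ I)) ∧ D ⊆ I ∧
      ∀ x ∈ C, x ∉ I := by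
  let := upgradeStandardBorel X
  let sat : Set X → Set X := fun S => Prod.snd '' (R ∩ (S ×ˢ Set.univ))
  have mem_sat : ∀ S y, y ∈ sat S ↔ ∃ x ∈ S, (x, y) ∈ R := by
    intro S y
    constructor
    · rintro ⟨⟨x, y'⟩, ⟨h1, h2, -⟩, rfl⟩
      exact ⟨x, h2, h1⟩
    · rintro ⟨x, h1, h2⟩
      exact ⟨(x, y), ⟨h2, h1, trivial⟩, rfl⟩
  have hsat : ∀ S, MeasurableSet S → AnalyticSet (sat S) := fun S hS =>
    (hR.inter (hS.prod MeasurableSet.univ)).analyticSet.image_of_continuous continuous_snd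
  let Q := {S : Set X // MeasurableSet S ∧ Disjoint S (sat C)}
  have step : ∀ S : Q, ∃ S' : Q, sat S.1 ⊆ S'.1 := by
    rintro ⟨S, hS, hSC⟩
    have hd : Disjoint (sat S) (sat C) := by
      rw [Set.disjoint_left] at hSC ⊢
      intro y hy hy'
      obtain ⟨x, hx, hxy⟩ := (mem_sat _ _).1 hy
      obtain ⟨z, hz, hzy⟩ := (mem_sat _ _).1 hy'
      exact hSC hx ((mem_sat _ _).2 ⟨z, hz, hE.trans hzy (hE.symm hxy)⟩)
    obtain ⟨u, hu1, hu2, hu3⟩ := (hsat S hS).measurablySeparable (hsat C hC) hd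
    exact ⟨⟨u, hu3, hu2.symm⟩, hu1⟩
  choose F hF using step
  let S0 : Q := ⟨D, hD, by
    rw [Set.disjoint_left]
    intro y hy hy'
    obtain ⟨x, hx, hxy⟩ := (mem_sat _ _).1 hy'
    exact hCD x hx y hy hxy⟩
  let S : ℕ → Q := fun n => F^[n] S0
  have hSs : ∀ n, sat (S n).1 ⊆ (S (n+1)).1 := by
    intro n
    simp only [S, Function.iterate_succ_apply']
    exact hF _
  have key : ∀ x y : X, (x, y) ∈ R → x ∈ ⋃ n, (S n).1 → y ∈ ⋃ n, (S n).1 := by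
    intro x y hxy hx
    obtain ⟨n, hn⟩ := Set.mem_iUnion.1 hx
    exact Set.mem_iUnion.2 ⟨n+1, hSs n ((mem_sat _ _).2 ⟨x, hn, hxy⟩)⟩
  refine ⟨⋃ n, (S n).1, MeasurableSet.iUnion fun n => (S n).2.1,
    fun x y hxy => ⟨key x y hxy, key y x (hE.symm hxy)⟩,
    Set.subset_iUnion (fun n => (S n).1) 0, ?_⟩
  intro x hx hxI
  obtain ⟨n, hn⟩ := Set.mem_iUnion.1 hxI
  exact Set.disjoint_left.1 (S n).2.2 hn ((mem_sat _ _).2 ⟨x, hx, hE.refl x⟩)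

theorem aux_piece {X : Type*} [MeasurableSpace X] [StandardBorelSpace X]
    (μ : Measure X) [IsProbabilityMeasure μ] (R : Set (X × X)) (hR : MeasurableSet R)
    (hE : Equivalence (fun x y : X => (x, y) ∈ R))
    (hRc : ∀ x : X, {y : X | (x, y) ∈ R}.Countable)
    (hR_erg : ∀ A' : Set X, MeasurableSet A' →
      (∀ x y : X, (x, y) ∈ R → (x ∈ A' ↔ y ∈ A')) → μ A' = 0 ∨ μ A' = 1)
    (C D : Set X) (hC : MeasurableSet C) (hD : MeasurableSet D) (hCp : μ C ≠ 0) (hDp : μ D ≠ 0) :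
    ∃ (P : Set X) (f : X → X), MeasurableSet P ∧ Measurable f ∧ P ⊆ C ∧ Set.MapsTo f P D ∧
      Set.InjOn f P ∧ (∀ x ∈ P, (x, f x) ∈ R) ∧ μ P ≠ 0 := by
  let := upgradeStandardBorel X
  let E : Set (X × X) := R ∩ C ×ˢ D
  have hEm : MeasurableSet E := hR.inter (hC.prod hD)
  have hproj : μ (Prod.fst '' E) ≠ 0 := by
    intro h0
    let N := toMeasurable μ (Prod.fst '' E)
    have hN : μ N = 0 := by rw [measure_toMeasurable]; exact h0
    have hC'm : MeasurableSet (C \ N) := hC.diff (measurableSet_toMeasurable _ _)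
    obtain ⟨I, hI, hinv, hDI, hCI⟩ := aux_invariant_sep R hR hE (C \ N) D hC'm hD (by
      intro x hx y hy hxy
      exact hx.2 (subset_toMeasurable _ _ ⟨(x, y), ⟨hxy, hx.1, hy⟩, rfl⟩))
    rcases hR_erg I hI hinv with h | h
    · exact hDp (measure_mono_null hDI h)
    · have h1 : μ Iᶜ = 0 := (prob_compl_eq_zero_iff hI).2 h
      refine hCp (measure_mono_null ?_ (measure_union_null hN h1))
      intro x hx
      by_cases hxN : x ∈ N
      · exact Or.inl hxN
      · exact Or.inr (hCI x ⟨hx, hxN⟩)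
  have hEa := hEm.analyticSet
  rw [AnalyticSet] at hEa
  rcases hEa with h | ⟨g, hg, hgE⟩
  · rw [h] at hproj; simp at hproj
  have hgE' : ∀ z, g z ∈ E := fun z => hgE ▸ Set.mem_range_self z
  obtain ⟨T, s, hT, hs, hsT, hnull⟩ := aux_selection μ (fun z => (g z).1) (continuous_fst.comp hg)
  have hTp : μ T ≠ 0 := by
    intro h0
    refine hproj (measure_mono_null ?_ (measure_union_null hnull h0))
    rintro _ ⟨p, hp, rfl⟩
    rw [← hgE] at hp
    obtain ⟨z, rfl⟩ := hp
    by_cases hz : (g z).1 ∈ T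
    · exact Or.inr hz
    · exact Or.inl ⟨⟨z, rfl⟩, hz⟩
  let f : X → X := fun x => (g (s x)).2
  have hf : Measurable f := (continuous_snd.comp hg).measurable.comp hs
  have hfE : ∀ x ∈ T, (x, f x) ∈ E := by
    intro x hx
    have : (x, f x) = g (s x) := Prod.ext (hsT x hx).symm rfl
    rw [this]; exact hgE' _
  obtain ⟨P, hPT, hP, hinj, hPp⟩ := aux_injective_piece μ R hR hRc T hT f hf
    (fun x hx => hE.symm (hfE x hx).1) hTp
  exact ⟨P, f, hP, hf, fun x hx => (hfE x (hPT hx)).2.1, fun x hx => (hfE x (hPT hx)).2.2,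
    hinj, fun x hx => (hfE x (hPT hx)).1, hPp⟩

/-- A Borel graph gives a Borel function. -/
theorem aux_graph {X : Type*} [MeasurableSpace X] [StandardBorelSpace X]
    (G : Set (X × X)) (hG : MeasurableSet G) (h1 : Set.InjOn Prod.fst G)
    (h2 : Set.InjOn Prod.snd G) :
    ∃ θ : X → X, Measurable θ ∧ Set.BijOn θ (Prod.fst '' G) (Prod.snd '' G) ∧
      ∀ x ∈ Prod.fst '' G, (x, θ x) ∈ G := by
  classical
  let θ : X → X := fun x => if h : ∃ y, (x, y) ∈ G then h.choose else x
  have hθ : ∀ x ∈ Prod.fst '' G, (x, θ x) ∈ G := by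
    rintro _ ⟨⟨x, y⟩, hp, rfl⟩
    have h : ∃ y, (x, y) ∈ G := ⟨y, hp⟩
    simp only [θ, dif_pos h]
    exact h.choose_spec
  have hθu : ∀ x y, (x, y) ∈ G → θ x = y := by
    intro x y h
    have := h1 (hθ x ⟨_, h, rfl⟩) h rfl
    exact congrArg Prod.snd this
  refine ⟨θ, ?_, ⟨?_, ?_, ?_⟩, hθ⟩
  · intro V hV
    have : θ ⁻¹' V = Prod.fst '' (G ∩ Prod.snd ⁻¹' V) ∪ (V \ Prod.fst '' G) := by
      ext x
      by_cases hx : x ∈ Prod.fst '' G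
      · constructor
        · intro h
          exact Or.inl ⟨(x, θ x), ⟨hθ x hx, h⟩, rfl⟩
        · rintro (⟨⟨x, y⟩, ⟨h, h'⟩, rfl⟩ | h)
          · change θ x ∈ V
            rw [hθu x y h]; exact h'
          · exact absurd hx h.2
      · have h0 : ¬ ∃ y, (x, y) ∈ G := fun ⟨y, hy⟩ => hx ⟨_, hy, rfl⟩
        have h3 : θ x = x := dif_neg h0
        constructor
        · intro h
          refine Or.inr ⟨?_, hx⟩
          rw [← h3]; exact h
        · rintro (⟨p, ⟨h, h'⟩, rfl⟩ | h)
          · exact absurd ⟨p, h, rfl⟩ hx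
          · change θ x ∈ V
            rw [h3]; exact h.1
    rw [this]
    refine ((hG.inter (measurable_snd hV)).image_of_measurable_injOn measurable_fst
      (h1.mono Set.inter_subset_left)).union
      (hV.diff (hG.image_of_measurable_injOn measurable_fst h1))
  · intro x hx; exact ⟨_, hθ x hx, rfl⟩
  · intro x hx x' hx' h
    exact congrArg Prod.fst (h2 (hθ x hx) (hθ x' hx') h)
  · rintro _ ⟨⟨x, y⟩, hp, rfl⟩
    exact ⟨x, ⟨_, hp, rfl⟩, hθu x y hp⟩

/-- Exhaustion principle. -/
theorem aux_exhaust {α : Type*} (Q : Set α → Prop) (m : Set α → ℝ≥0∞)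
    (hm : ∀ S, m S ≤ 1) (hmono : ∀ S S', S ⊆ S' → m S ≤ m S') (hQ0 : Q ∅)
    (hQ : ∀ S : ℕ → Set α, Monotone S → (∀ n, Q (S n)) → Q (⋃ n, S n)) :
    ∃ G, Q G ∧ ∀ G', Q G' → G ⊆ G' → m G' ≤ m G := by
  let sp : Set α → ℝ≥0∞ := fun S => ⨆ S' : {S' // Q S' ∧ S ⊆ S'}, m S'.1
  have step : ∀ (n : ℕ) (S : {S // Q S}), ∃ S' : {S // Q S}, S.1 ⊆ S'.1 ∧
      sp S.1 ≤ m S'.1 + ((n : ℝ≥0∞) + 1)⁻¹ := by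
    rintro n ⟨S, hS⟩
    by_contra! hcon
    have hle : ∀ S', Q S' → S ⊆ S' → m S' + ((n : ℝ≥0∞) + 1)⁻¹ ≤ sp S := fun S' h1 h2 =>
      (hcon ⟨S', h1⟩ h2).le
    have hsp : sp S ≤ 1 := iSup_le fun _ => hm _
    have h1 : sp S + ((n : ℝ≥0∞) + 1)⁻¹ ≤ sp S := by
      have : Nonempty {S' // Q S' ∧ S ⊆ S'} := ⟨⟨S, hS, subset_rfl⟩⟩
      simp only [sp]
      rw [ENNReal.iSup_add]
      exact iSup_le fun S' => hle _ S'.2.1 S'.2.2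
    have h2 : sp S < sp S + ((n : ℝ≥0∞) + 1)⁻¹ :=
      ENNReal.lt_add_right (ne_top_of_le_ne_top ENNReal.one_ne_top hsp)
        (ENNReal.inv_ne_zero.2 (by finiteness))
    exact absurd h1 (not_le.2 h2)
  choose F hF1 hF2 using step
  let S : ℕ → {S // Q S} := fun n => Nat.rec ⟨∅, hQ0⟩ (fun n S => F n S) n
  have hSm : Monotone fun n => (S n).1 := monotone_nat_of_le_succ fun n => hF1 n (S n)
  refine ⟨⋃ n, (S n).1, hQ _ hSm fun n => (S n).2, ?_⟩
  intro G' hG' hsub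
  refine ENNReal.le_of_forall_pos_le_add fun ε hε _ => ?_
  obtain ⟨n, hn⟩ := ENNReal.exists_inv_nat_lt (a := ε) (by simpa using hε.ne')
  calc m G' ≤ sp (S n).1 :=
        le_iSup (fun S' : {S' // Q S' ∧ (S n).1 ⊆ S'} => m S'.1)
          ⟨G', hG', (Set.subset_iUnion (fun n => (S n).1) n).trans hsub⟩
    _ ≤ m (S (n+1)).1 + ((n : ℝ≥0∞) + 1)⁻¹ := hF2 n (S n)
    _ ≤ _ := by
      refine add_le_add (hmono _ _ (Set.subset_iUnion (fun n => (S n).1) (n+1))) ?_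
      refine le_trans ?_ hn.le
      exact ENNReal.inv_le_inv.2 le_self_add

/-- Let `R` be an ergodic measure-preserving countable Borel equivalence relation on a
standard probability space `(X, μ)`, and let `A`, `B` be Borel sets with
`μ(A) = μ(B) > 0`.  Then, after discarding a null set, there is a Borel bijection
from `A` to `B` whose graph is contained in `R`. -/
theorem exists_partial_bijection_of_ergodic
    {X : Type*} [MeasurableSpace X] [StandardBorelSpace X]
    (μ : Measure X) [IsProbabilityMeasure μ]
    (R : Set (X × X))
    (hR_meas : MeasurableSet R)
    (hR_equiv : Equivalence (fun x y : X => (x, y) ∈ R))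
    (hR_count : ∀ x : X, {y : X | (x, y) ∈ R}.Countable)
    (hR_pmp : ∀ (A' B' : Set X) (f : X → X), MeasurableSet A' → MeasurableSet B' →
      Measurable f → Set.BijOn f A' B' → (∀ x ∈ A', (x, f x) ∈ R) → μ A' = μ B')
    (hR_erg : ∀ A' : Set X, MeasurableSet A' →
      (∀ x y : X, (x, y) ∈ R → (x ∈ A' ↔ y ∈ A')) → μ A' = 0 ∨ μ A' = 1)
    (A B : Set X) (hA : MeasurableSet A) (hB : MeasurableSet B)
    (hAB : μ A = μ B) (hApos : 0 < μ A) :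
    ∃ (A' B' : Set X) (θ : X → X),
      MeasurableSet A' ∧ MeasurableSet B' ∧ A' ⊆ A ∧ B' ⊆ B ∧
      μ (A \ A') = 0 ∧ μ (B \ B') = 0 ∧
      Measurable θ ∧ Set.BijOn θ A' B' ∧ ∀ x ∈ A', (x, θ x) ∈ R := by
  let Q : Set (X × X) → Prop := fun G => MeasurableSet G ∧ G ⊆ R ∩ A ×ˢ B ∧
    Set.InjOn Prod.fst G ∧ Set.InjOn Prod.snd G
  obtain ⟨G, ⟨hG, hGs, h1, h2⟩, hmax⟩ := aux_exhaust Q (fun G => μ (Prod.fst '' G))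
    (fun _ => prob_le_one) (fun _ _ h => measure_mono (Set.image_mono h))
    ⟨MeasurableSet.empty, by simp, by simp, by simp⟩ (by
      intro S hS hQ
      refine ⟨MeasurableSet.iUnion fun n => (hQ n).1, Set.iUnion_subset fun n => (hQ n).2.1, ?_, ?_⟩
      · exact Set.inj_on_iUnion_of_directed hS.directed_le fun n => (hQ n).2.2.1
      · exact Set.inj_on_iUnion_of_directed hS.directed_le fun n => (hQ n).2.2.2)
  obtain ⟨θ, hθ, hbij, hgr⟩ := aux_graph G hG h1 h2
  have hA' : MeasurableSet (Prod.fst '' G) := hG.image_of_measurable_injOn measurable_fst h1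
  have hB' : MeasurableSet (Prod.snd '' G) := hG.image_of_measurable_injOn measurable_snd h2
  have hA's : Prod.fst '' G ⊆ A := by rintro _ ⟨p, hp, rfl⟩; exact (hGs hp).2.1
  have hB's : Prod.snd '' G ⊆ B := by rintro _ ⟨p, hp, rfl⟩; exact (hGs hp).2.2
  have hgR : ∀ x ∈ Prod.fst '' G, (x, θ x) ∈ R := fun x hx => (hGs (hgr x hx)).1
  have heq : μ (Prod.fst '' G) = μ (Prod.snd '' G) := hR_pmp _ _ θ hA' hB' hθ hbij hgR
  have hd : μ (A \ Prod.fst '' G) = μ (B \ Prod.snd '' G) := by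
    rw [measure_diff hA's hA'.nullMeasurableSet (measure_ne_top _ _),
      measure_diff hB's hB'.nullMeasurableSet (measure_ne_top _ _), hAB, heq]
  have hz : μ (A \ Prod.fst '' G) = 0 := by
    by_contra hne
    obtain ⟨P, f, hP, hf, hPC, hPD, hinj, hfR, hPp⟩ := aux_piece μ R hR_meas hR_equiv hR_count hR_erg
      (A \ Prod.fst '' G) (B \ Prod.snd '' G) (hA.diff hA') (hB.diff hB') hne (hd ▸ hne)
    have hem : Measurable fun x => (x, f x) := measurable_id.prodMk hf
    let K : Set (X × X) := (fun x => (x, f x)) '' P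
    have hK : MeasurableSet K := hP.image_of_measurable_injOn hem
      (fun x _ y _ h => congrArg Prod.fst h)
    have hle := hmax (G ∪ K) (by
      refine ⟨hG.union hK, Set.union_subset hGs ?_, ?_, ?_⟩
      · rintro _ ⟨x, hx, rfl⟩
        exact ⟨hfR x hx, (hPC hx).1, (hPD hx).1⟩
      · rintro p (hp | ⟨x, hx, rfl⟩) q (hq | ⟨y, hy, rfl⟩) hpq
        · exact h1 hp hq hpq
        · exact absurd ⟨p, hp, hpq⟩ (hPC hy).2
        · exact absurd ⟨q, hq, hpq.symm⟩ (hPC hx).2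
        · simp only at hpq; rw [hpq]
      · rintro p (hp | ⟨x, hx, rfl⟩) q (hq | ⟨y, hy, rfl⟩) hpq
        · exact h2 hp hq hpq
        · exact absurd ⟨p, hp, hpq⟩ (hPD hy).2
        · exact absurd ⟨q, hq, hpq.symm⟩ (hPD hx).2
        · have := hinj hx hy hpq
          rw [this]) Set.subset_union_left
    have himg : Prod.fst '' (G ∪ K) = Prod.fst '' G ∪ P := by
      rw [Set.image_union]
      congr 1
      simp [K, Set.image_image]
    have hdis : Disjoint (Prod.fst '' G) P := by
      rw [Set.disjoint_left]
      intro x hx hxP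
      exact (hPC hxP).2 hx
    simp only [himg] at hle
    rw [measure_union hdis hP] at hle
    exact absurd hle (not_le.2 (ENNReal.lt_add_right (measure_ne_top _ _) hPp))
  exact ⟨_, _, θ, hA', hB', hA's, hB's, hz, hd ▸ hz, hθ, hbij, hgR⟩
end
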